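/- (Perturbation into general position) Let (S,d) be a Busemann surface, let Q = {p₁,…,pₙ} be a finite set of points of S, and let ε > 0. Then there exist points p'₁,…,p'ₙ ∈ S forming a set in general position such that d(pᵢ,p'ᵢ) < ε for every i (hence |d(pᵢ,pⱼ) − d(p'ᵢ,p'ⱼ)| < 2ε for all i, j). -/

import Mathlib

open Metric Set MeasureTheory

/-- `γ` is a geodesic on the interval `[a, b]`. -/
def IsGeodesicOn {S : Type*} [MetricSpace S] (γ : ℝ → S) (a b : ℝ) : Prop :=
  ∀ s ∈ Set.Icc a b, ∀ t ∈ Set.Icc a b, dist (γ s) (γ t) = |s - t|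

/-- `γ` is a geodesic from `x` to `y`. -/
def IsGeodesicFromTo {S : Type*} [MetricSpace S] (γ : ℝ → S) (x y : S) : Prop :=
  IsGeodesicOn γ 0 (dist x y) ∧ γ 0 = x ∧ γ (dist x y) = y

/-- A geodesic metric space: every pair of points is joined by a geodesic. -/
def IsGeodesicMetricSpace (S : Type*) [MetricSpace S] : Prop :=
  ∀ x y : S, ∃ γ : ℝ → S, IsGeodesicFromTo γ x y

/-- A Busemann space: a geodesic metric space in which the distance function between
any two geodesics is convex. -/
def IsBusemannSpace (S : Type*) [MetricSpace S] : Prop :=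
  IsGeodesicMetricSpace S ∧
    ∀ (γ γ' : ℝ → S) (a b a' b' : ℝ), a ≤ b → a' ≤ b' →
      IsGeodesicOn γ a b → IsGeodesicOn γ' a' b' →
      ConvexOn ℝ (Set.Icc (0 : ℝ) 1)
        (fun t => dist (γ ((1 - t) * a + t * b)) (γ' ((1 - t) * a' + t * b')))

/-- A Busemann surface: a Busemann space homeomorphic to the plane `ℝ²`. -/
def IsBusemannSurface (S : Type*) [MetricSpace S] : Prop :=
  IsBusemannSpace S ∧ Nonempty (S ≃ₜ (ℝ × ℝ))

/-- `G` is the image of a geodesic from `x` to `y`. -/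
def IsGeodesicSegment {S : Type*} [MetricSpace S] (x y : S) (G : Set S) : Prop :=
  ∃ γ : ℝ → S, IsGeodesicFromTo γ x y ∧ G = γ '' Set.Icc 0 (dist x y)

/-- Convexity of a set with respect to a geodesic-segment assignment `seg`. -/
def SegConvex {S : Type*} (seg : S → S → Set S) (R : Set S) : Prop :=
  ∀ p ∈ R, ∀ q ∈ R, seg p q ⊆ R

/-- The convex hull: the smallest `seg`-convex set containing `Q`. -/
def segConvexHull {S : Type*} (seg : S → S → Set S) (Q : Set S) : Set S :=
  ⋂₀ {R : Set S | SegConvex seg R ∧ Q ⊆ R}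

/-- A line of `S`: the image of an isometric embedding of `ℝ` into `S`. -/
def IsLineSet {S : Type*} [MetricSpace S] (L : Set S) : Prop :=
  ∃ ℓ : ℝ → S, Isometry ℓ ∧ L = Set.range ℓ

/-- An open halfplane determined by a line `L`: a connected component of `S \ L`. -/
def IsOpenHalfplane {S : Type*} [MetricSpace S] (L H : Set S) : Prop :=
  ∃ x, x ∉ L ∧ H = connectedComponentIn Lᶜ x

/-- A closed halfplane determined by a line `L`: an open halfplane together with `L`. -/
def IsClosedHalfplane {S : Type*} [MetricSpace S] (L H : Set S) : Prop :=
  ∃ H', IsOpenHalfplane L H' ∧ H = H' ∪ L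

/-- `X` and `Y` are line-separable: they lie in different open halfplanes of some line. -/
def LineSeparable {S : Type*} [MetricSpace S] (X Y : Set S) : Prop :=
  ∃ L H₁ H₂ : Set S, IsLineSet L ∧ IsOpenHalfplane L H₁ ∧ IsOpenHalfplane L H₂ ∧
    H₁ ≠ H₂ ∧ X ⊆ H₁ ∧ Y ⊆ H₂

/-- `X` and `Y` are weakly line-separable: they lie in different closed halfplanes of
some line. -/
def WeaklyLineSeparable {S : Type*} [MetricSpace S] (X Y : Set S) : Prop :=
  ∃ L H₁ H₂ : Set S, IsLineSet L ∧ IsClosedHalfplane L H₁ ∧ IsClosedHalfplane L H₂ ∧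
    H₁ ≠ H₂ ∧ X ⊆ H₁ ∧ Y ⊆ H₂

/-- `Q` is in general position: no three distinct points of `Q` lie on a common line. -/
def InGeneralPosition {S : Type*} [MetricSpace S] (Q : Set S) : Prop :=
  ∀ x ∈ Q, ∀ y ∈ Q, ∀ z ∈ Q, x ≠ y → y ≠ z → x ≠ z →
    ∀ L : Set S, IsLineSet L → ¬(x ∈ L ∧ y ∈ L ∧ z ∈ L)

/-- `L` is a tangent line of the set `K`. -/
def IsTangentLine {S : Type*} [MetricSpace S] (L K : Set S) : Prop :=
  IsLineSet L ∧ (K ∩ L).Nonempty ∧ ∃ H, IsClosedHalfplane L H ∧ K ⊆ H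

/-- `L` is an inner bitangent of `K'` and `K''`. -/
def IsInnerBitangent {S : Type*} [MetricSpace S] (L K' K'' : Set S) : Prop :=
  IsTangentLine L K' ∧ IsTangentLine L K'' ∧
    ∃ H₁ H₂, IsClosedHalfplane L H₁ ∧ IsClosedHalfplane L H₂ ∧ H₁ ≠ H₂ ∧
      K' ⊆ H₁ ∧ K'' ⊆ H₂

/-!
In a Busemann space any two geodesics with the same endpoints coincide, so `dist x` is injective on
the set of points lying between `x` and `z`. A continuous real function is never injective on a
nonempty open subset of a manifold of dimension at least two (antipodal points of a small sphere get
equal values somewhere), so on a surface this set has empty interior.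

Three points of a line always have one between the other two. For each triple of distinct indices
`i, j, k`, the tuples whose `j`-th point is not between the `i`-th and the `k`-th form an open set,
and it is dense because the `j`-th point alone can be moved off that set. All points have to be
chosen simultaneously, by Baire category: since geodesics may branch, the points beyond `y` as seen
from `x` can have nonempty interior, so adding one point at a time could get stuck.
-/

section Geodesic

variable {S : Type*} [MetricSpace S]

/-- The metric segment between `x` and `z`: the points for which the triangle inequality is an
equality. In a geodesic space it is the union of all geodesic segments from `x` to `z`. -/
def metricSegment (x z : S) : Set S :=
  {y | dist x y + dist y z = dist x z}

lemma isGeodesicOn_of_dist_le {γ : ℝ → S} {a b : ℝ}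
    (hle : ∀ s ∈ Icc a b, ∀ t ∈ Icc a b, s ≤ t → dist (γ s) (γ t) ≤ t - s)
    (hends : b - a ≤ dist (γ a) (γ b)) : IsGeodesicOn γ a b := by
  have dist_of_le : ∀ s ∈ Icc a b, ∀ t ∈ Icc a b, s ≤ t → dist (γ s) (γ t) = t - s := by
    intro s hs t ht hst
    have hab : a ≤ b := hs.1.trans hs.2
    have before := hle a (left_mem_Icc.2 hab) s hs hs.1
    have after := hle t ht b (right_mem_Icc.2 hab) ht.2
    linarith [hle s hs t ht hst, dist_triangle4 (γ a) (γ s) (γ t) (γ b)]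
  intro s hs t ht
  rcases le_total s t with hst | hts
  · rw [dist_of_le s hs t ht hst, abs_sub_comm, abs_of_nonneg (sub_nonneg.2 hst)]
  · rw [dist_comm, dist_of_le t ht s hs hts, abs_of_nonneg (sub_nonneg.2 hts)]

lemma IsGeodesicOn.dist_of_le {γ : ℝ → S} {a b s t : ℝ} (hγ : IsGeodesicOn γ a b)
    (has : a ≤ s) (hst : s ≤ t) (htb : t ≤ b) : dist (γ s) (γ t) = t - s := by
  rw [hγ s ⟨has, hst.trans htb⟩ t ⟨has.trans hst, htb⟩, abs_sub_comm,
    abs_of_nonneg (sub_nonneg.2 hst)]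

lemma IsGeodesicOn.concat {γ₁ γ₂ : ℝ → S} {a b c : ℝ} (h₁ : IsGeodesicOn γ₁ a b)
    (h₂ : IsGeodesicOn γ₂ b c) (hab : a ≤ b) (hbc : b ≤ c) (hglue : γ₁ b = γ₂ b)
    (hends : c - a ≤ dist (γ₁ a) (γ₂ c)) :
    IsGeodesicOn (fun s => if s ≤ b then γ₁ s else γ₂ s) a c := by
  have right_eq : ∀ s, b ≤ s → (if s ≤ b then γ₁ s else γ₂ s) = γ₂ s := by
    intro s hs
    split_ifs with hsb
    · rw [hsb.antisymm hs, hglue]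
    · rfl
  refine isGeodesicOn_of_dist_le (fun s hs t ht hst => ?_) ?_
  · rcases le_total t b with htb | hbt
    · simp only [if_pos htb, if_pos (hst.trans htb)]
      exact (h₁.dist_of_le hs.1 hst htb).le
    rcases le_total b s with hbs | hsb
    · simp only [right_eq _ hbs, right_eq _ hbt]
      exact (h₂.dist_of_le hbs hst ht.2).le
    · simp only [if_pos hsb, right_eq _ hbt]
      calc dist (γ₁ s) (γ₂ t) ≤ dist (γ₁ s) (γ₁ b) + dist (γ₂ b) (γ₂ t) := by
            rw [hglue]; exact dist_triangle _ _ _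
        _ = t - s := by
            rw [h₁.dist_of_le hs.1 hsb le_rfl, h₂.dist_of_le le_rfl hbt ht.2]; ring
  · simpa only [if_pos hab, right_eq c hbc] using hends

lemma IsGeodesicOn.comp_sub_const {γ : ℝ → S} {a b : ℝ} (hγ : IsGeodesicOn γ a b) (c : ℝ) :
    IsGeodesicOn (fun s => γ (s - c)) (a + c) (b + c) := by
  intro s hs t ht
  rw [hγ (s - c) (by grind) (t - c) (by grind), sub_sub_sub_cancel_right]

lemma IsGeodesicMetricSpace.exists_isGeodesicFromTo_through (hS : IsGeodesicMetricSpace S)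
    {x y z : S} (hy : y ∈ metricSegment x z) :
    ∃ γ : ℝ → S, IsGeodesicFromTo γ x z ∧ γ (dist x y) = y := by
  obtain ⟨γ₁, hγ₁, start₁, end₁⟩ := hS x y
  obtain ⟨γ₂, hγ₂, start₂, end₂⟩ := hS y z
  have hlength : dist y z + dist x y = dist x z := (add_comm _ _).trans hy
  have hshift := hγ₂.comp_sub_const (dist x y)
  rw [zero_add, hlength] at hshift
  have end₂' : γ₂ (dist x z - dist x y) = z := by rw [← hlength, add_sub_cancel_right, end₂]
  have hxz : dist x y ≤ dist x z := by linarith [dist_nonneg (x := y) (y := z)]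
  refine ⟨_, ⟨hγ₁.concat hshift dist_nonneg hxz ?_ ?_, ?_, ?_⟩, ?_⟩
  · rw [end₁, sub_self, start₂]
  · rw [start₁, end₂', sub_zero]
  · rw [if_pos dist_nonneg, start₁]
  · split_ifs with hzx
    · have hyz : y = z := dist_eq_zero.1 (by linarith [dist_nonneg (x := y) (y := z)])
      rw [← hyz, end₁]
    · exact end₂'
  · rw [if_pos le_rfl, end₁]

lemma IsBusemannSpace.eqOn_of_isGeodesicFromTo (hS : IsBusemannSpace S) {γ γ' : ℝ → S} {x z : S}
    (hγ : IsGeodesicFromTo γ x z) (hγ' : IsGeodesicFromTo γ' x z) :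
    EqOn γ γ' (Icc 0 (dist x z)) := by
  intro s hs
  rcases (dist_nonneg (x := x) (y := z)).eq_or_lt with hxz | hxz
  · obtain rfl : s = 0 := le_antisymm (hs.2.trans hxz.ge) hs.1
    rw [hγ.2.1, hγ'.2.1]
  have hconv := hS.2 γ γ' 0 (dist x z) 0 (dist x z) dist_nonneg dist_nonneg hγ.1 hγ'.1
  have hτ : s / dist x z ∈ segment ℝ (0 : ℝ) 1 := by
    rw [segment_eq_Icc zero_le_one]
    exact ⟨div_nonneg hs.1 hxz.le, (div_le_one hxz).2 hs.2⟩
  have hle := hconv.le_on_segment (left_mem_Icc.2 zero_le_one) (right_mem_Icc.2 zero_le_one) hτ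
  simp only [mul_zero, zero_add, div_mul_cancel₀ _ hxz.ne', zero_mul, one_mul, hγ.2.1, hγ.2.2,
    hγ'.2.1, hγ'.2.2, dist_self, max_self] at hle
  exact dist_le_zero.1 hle

lemma IsBusemannSpace.injOn_dist_metricSegment (hS : IsBusemannSpace S) (x z : S) :
    InjOn (dist x) (metricSegment x z) := by
  intro y hy y' hy' heq
  obtain ⟨γ, hγ, hγy⟩ := hS.1.exists_isGeodesicFromTo_through hy
  obtain ⟨γ', hγ', hγ'y'⟩ := hS.1.exists_isGeodesicFromTo_through hy'
  have hs : dist x y ∈ Icc 0 (dist x z) :=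
    ⟨dist_nonneg, (le_add_of_nonneg_right dist_nonneg).trans_eq hy⟩
  calc y = γ (dist x y) := hγy.symm
    _ = γ' (dist x y) := hS.eqOn_of_isGeodesicFromTo hγ hγ' hs
    _ = y' := by rw [heq, hγ'y']

end Geodesic

section Noninjectivity

variable {E : Type*} [NormedAddCommGroup E] [NormedSpace ℝ E]

lemma exists_mem_sphere_eq_neg (hE : 1 < Module.rank ℝ E) {r : ℝ} (hr : 0 ≤ r) {f : E → ℝ}
    (hf : ContinuousOn f (sphere 0 r)) : ∃ v ∈ sphere (0 : E) r, f v = f (-v) := by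
  have hsphere := isConnected_sphere hE (0 : E) hr
  have neg_mem : MapsTo Neg.neg (sphere (0 : E) r) (sphere 0 r) := fun v hv => by simpa using hv
  have hfneg : ContinuousOn (fun v => f (-v)) (sphere 0 r) := hf.comp continuousOn_neg neg_mem
  obtain ⟨w, hw⟩ := hsphere.nonempty
  wlog hle : f w ≤ f (-w) generalizing w
  · exact this (-w) (neg_mem hw) (by rw [neg_neg]; exact (not_le.1 hle).le)
  exact hsphere.isPreconnected.intermediate_value₂ hw (neg_mem hw) hf hfneg hle
    (by rwa [neg_neg])

lemma not_injOn_of_isOpen_of_one_lt_rank (hE : 1 < Module.rank ℝ E) {U : Set E} (hU : IsOpen U)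
    (hne : U.Nonempty) {f : E → ℝ} (hf : ContinuousOn f U) : ¬InjOn f U := by
  intro hinj
  obtain ⟨c, hc⟩ := hne
  obtain ⟨r, hr, hball⟩ := nhds_basis_closedBall.mem_iff.1 (hU.mem_nhds hc)
  have add_mem : MapsTo (c + ·) (sphere 0 r) U := fun v hv => hball (by simpa using hv.le)
  have hcont : ContinuousOn (fun v => f (c + v)) (sphere 0 r) :=
    hf.comp (by fun_prop) add_mem
  obtain ⟨v, hv, heq⟩ := exists_mem_sphere_eq_neg hE hr.le hcont
  have hneg : v = -v :=
    add_left_cancel (hinj (add_mem hv) (add_mem (by simpa using hv)) heq)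
  exact ne_neg_of_mem_sphere ℝ hr.ne' ⟨v, hv⟩ (Subtype.ext hneg)

lemma not_injOn_of_isOpen_of_chartedSpace {M : Type*} [TopologicalSpace M] [ChartedSpace E M]
    (hE : 1 < Module.rank ℝ E) {U : Set M} (hU : IsOpen U) (hne : U.Nonempty) {f : M → ℝ}
    (hf : ContinuousOn f U) : ¬InjOn f U := by
  intro hinj
  obtain ⟨x, hx⟩ := hne
  let e := chartAt E x
  have hV : IsOpen (e.target ∩ e.symm ⁻¹' U) := e.isOpen_inter_preimage_symm hU
  have hxV : e x ∈ e.target ∩ e.symm ⁻¹' U :=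
    ⟨mem_chart_target E x, by rwa [mem_preimage, e.left_inv (mem_chart_source E x)]⟩
  have hmaps : MapsTo e.symm (e.target ∩ e.symm ⁻¹' U) U := fun _ hy => hy.2
  exact not_injOn_of_isOpen_of_one_lt_rank hE hV ⟨_, hxV⟩
    (hf.comp (e.continuousOn_symm.mono inter_subset_left) hmaps)
    (hinj.comp (e.symm.injOn.mono inter_subset_left) hmaps)

lemma interior_metricSegment_eq_empty {S : Type*} [MetricSpace S] [ChartedSpace E S]
    (hE : 1 < Module.rank ℝ E) {x z : S} (hinj : InjOn (dist x) (metricSegment x z)) :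
    interior (metricSegment x z) = ∅ := by
  by_contra hne
  exact not_injOn_of_isOpen_of_chartedSpace hE isOpen_interior (nonempty_iff_ne_empty.2 hne)
    (by fun_prop) (hinj.mono interior_subset)

end Noninjectivity

section Surface

variable {S : Type*} [MetricSpace S]

lemma IsBusemannSurface.interior_metricSegment (hS : IsBusemannSurface S) (x z : S) :
    interior (metricSegment x z) = ∅ := by
  obtain ⟨hB, ⟨φ⟩⟩ := hS
  let _ : ChartedSpace (ℝ × ℝ) S := φ.toOpenPartialHomeomorph.singletonChartedSpace rfl
  have hrank : 1 < Module.rank ℝ (ℝ × ℝ) := by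
    simp only [rank_prod', Module.rank_self, one_add_one_eq_two, Cardinal.one_lt_two]
  exact interior_metricSegment_eq_empty hrank (hB.injOn_dist_metricSegment x z)

lemma IsBusemannSurface.polishSpace (hS : IsBusemannSurface S) : PolishSpace S :=
  let ⟨φ⟩ := hS.2
  φ.isClosedEmbedding.polishSpace

end Surface

section GeneralPosition

variable {S : Type*} [MetricSpace S]

lemma IsLineSet.mem_metricSegment_or {L : Set S} (hL : IsLineSet L) {x y z : S} (hx : x ∈ L)
    (hy : y ∈ L) (hz : z ∈ L) :
    x ∈ metricSegment y z ∨ y ∈ metricSegment x z ∨ z ∈ metricSegment x y := by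
  obtain ⟨ℓ, hℓ, rfl⟩ := hL
  obtain ⟨a, rfl⟩ := hx
  obtain ⟨b, rfl⟩ := hy
  obtain ⟨c, rfl⟩ := hz
  simp only [metricSegment, mem_ofPred_eq, hℓ.dist_eq, Real.dist_eq]
  grind

lemma inGeneralPosition_range_of_notMem_metricSegment {ι : Type*} {q : ι → S}
    (hq : ∀ i j k, i ≠ j → k ≠ j → q j ∉ metricSegment (q i) (q k)) :
    InGeneralPosition (range q) := by
  rintro _ ⟨i, rfl⟩ _ ⟨j, rfl⟩ _ ⟨k, rfl⟩ hij hjk hik L hL ⟨hi, hj, hk⟩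
  have nij := ne_of_apply_ne q hij
  have njk := ne_of_apply_ne q hjk
  have nik := ne_of_apply_ne q hik
  rcases hL.mem_metricSegment_or hi hj hk with hmem | hmem | hmem
  · exact hq j i k nij.symm nik.symm hmem
  · exact hq i j k nij njk.symm hmem
  · exact hq i k j nik njk hmem

lemma dense_of_forall_dense_update {ι : Type*} {X : ι → Type*} [∀ i, TopologicalSpace (X i)]
    [DecidableEq ι] {A : Set (∀ i, X i)} (j : ι)
    (hA : ∀ q, Dense {y | Function.update q j y ∈ A}) : Dense A := fun q => by
  have hmem : Function.update q j (q j) ∈ closure A :=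
    map_mem_closure (continuous_const.update j continuous_id) (hA q (q j)) fun _ hy => hy
  rwa [Function.update_eq_self] at hmem

lemma exists_forall_mem_notMem_metricSegment [PolishSpace S]
    (hS : ∀ x z : S, interior (metricSegment x z) = ∅) {ι : Type*} [Countable ι] {U : ι → Set S}
    (hU : ∀ i, IsOpen (U i)) (hne : ∀ i, (U i).Nonempty) :
    ∃ q : ι → S, (∀ i, q i ∈ U i) ∧
      ∀ i j k, i ≠ j → k ≠ j → q j ∉ metricSegment (q i) (q k) := by
  classical
  have : ∀ i, PolishSpace (U i) := fun i => (hU i).polishSpace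
  have : ∀ i, Nonempty (U i) := fun i => (hne i).to_subtype
  let A (t : {t : ι × ι × ι // t.1 ≠ t.2.1 ∧ t.2.2 ≠ t.2.1}) : Set (∀ i, U i) :=
    {q | (q t.1.2.1 : S) ∉ metricSegment (q t.1.1 : S) (q t.1.2.2)}
  have hopen : ∀ t, IsOpen (A t) := fun t => isOpen_ne_fun (by fun_prop) (by fun_prop)
  have hdense : ∀ t, Dense (A t) := by
    rintro ⟨⟨i, j, k⟩, hij, hkj⟩
    refine dense_of_forall_dense_update j fun q => ?_
    have hcompl : Dense (metricSegment (q i : S) (q k))ᶜ :=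
      interior_eq_empty_iff_dense_compl.1 (hS _ _)
    have hfiber : {y : U j | Function.update q j y ∈ A ⟨(i, j, k), hij, hkj⟩} =
        Subtype.val ⁻¹' (metricSegment (q i : S) (q k))ᶜ := by
      ext y
      simp [A, hij, hkj]
    rw [hfiber]
    exact hcompl.preimage (hU j).isOpenMap_subtype_val
  obtain ⟨q, hq⟩ := (dense_iInter_of_isOpen hopen hdense).nonempty
  exact ⟨fun i => q i, fun i => (q i).2,
    fun i j k hij hkj => mem_iInter.1 hq ⟨(i, j, k), hij, hkj⟩⟩

end GeneralPosition

theorem busemann_surface_perturbation_general {S : Type*} [MetricSpace S] [PolishSpace S]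
    (hS : ∀ x z : S, interior (metricSegment x z) = ∅) {ι : Type*} [Countable ι]
    (p : ι → S) {ε : ι → ℝ} (hε : ∀ i, 0 < ε i) :
    ∃ p' : ι → S, InGeneralPosition (range p') ∧ (∀ i, dist (p i) (p' i) < ε i) ∧
      ∀ i j, |dist (p i) (p j) - dist (p' i) (p' j)| < ε i + ε j := by
  obtain ⟨p', hmem, hp'⟩ := exists_forall_mem_notMem_metricSegment hS
    (U := fun i => ball (p i) (ε i)) (fun _ => isOpen_ball) (fun i => nonempty_ball.2 (hε i))
  have hclose : ∀ i, dist (p i) (p' i) < ε i := fun i => mem_ball'.1 (hmem i)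
  exact ⟨p', inGeneralPosition_range_of_notMem_metricSegment hp', hclose,
    fun i j => (dist_dist_dist_le _ _ _ _).trans_lt (add_lt_add (hclose i) (hclose j))⟩

/-- perturbation into general position: any finite family of points of a
Busemann surface can be perturbed by less than `ε` into a set in general position. -/
theorem busemann_surface_perturbation {S : Type*} [MetricSpace S]
    (hS : IsBusemannSurface S)
    (n : ℕ) (p : Fin n → S) (ε : ℝ) (hε : 0 < ε) :
    ∃ p' : Fin n → S, InGeneralPosition (Set.range p') ∧
      (∀ i, dist (p i) (p' i) < ε) ∧
      (∀ i j, |dist (p i) (p j) - dist (p' i) (p' j)| < 2 * ε) := by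
  have := hS.polishSpace
  simpa only [two_mul] using
    busemann_surface_perturbation_general hS.interior_metricSegment p fun _ => hε
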